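/- Let R₃ be the unique positive root of R⁶+R⁵−4R⁴−8R³−10R²−6R−2 = 0, and suppose the step ratios satisfy 0 < r_k ≤ R' for all k ≥ 2, for some fixed R' < R₃. Let ϑ^{(3,n)}_{n−j} be the DOC kernels associated with the BDF3 kernels d^{(3,n)}_j = d_j(r_n,r_{n−1}) (j = 0,1,2), d^{(3,n)}_j = 0 (j ≥ 3), defined by ϑ^{(3,n)}_0 = 1/d^{(3,n)}_0 and ϑ^{(3,n)}_{n−j} = −(1/d^{(3,j)}_0)·Σ_{i=j+1}^{n} ϑ^{(3,n)}_{n−i} d^{(3,i)}_{i−j} for 3 ≤ j ≤ n−1. Then there exist constants c > 0 and δ ∈ (0,1), depending only on R', such that |ϑ^{(3,n)}_{n−j}| ≤ c·δ^{n−j−1} for all n ≥ j+2 ≥ 5. Moreover ϑ^{(3,j)}_0 = 1/d^{(3,j)}_0 ∈ (0,1] and ϑ^{(3,j+1)}_1 ∈ (0,2] for all j ≥ 3. -/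

import Mathlib

/-- BDF coefficient function `d₀(x,y)`. -/
noncomputable def d0 (x y : ℝ) : ℝ := (1 + 2*x)/(1 + x) + x*y/(1 + y + x*y)

/-- BDF coefficient function `d₁(x,y)`. -/
noncomputable def d1 (x y : ℝ) : ℝ :=
  -(x/(1 + x)) - x*y/(1 + y + x*y) - (x*y^2/(1 + y + x*y)) * ((1 + x)/(1 + y))

/-- BDF coefficient function `d₂(x,y)`. -/
noncomputable def d2 (x y : ℝ) : ℝ := (x*y^2/(1 + y + x*y)) * ((1 + x)/(1 + y))

/-- The BDF3 kernels `d^{(3,n)}_j = d_j(r_n, r_{n-1})` for `j = 0,1,2`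
and `d^{(3,n)}_j = 0` for `j ≥ 3`. -/
noncomputable def dk3 (r : ℕ → ℝ) (n j : ℕ) : ℝ :=
  if j = 0 then d0 (r n) (r (n - 1))
  else if j = 1 then d1 (r n) (r (n - 1))
  else if j = 2 then d2 (r n) (r (n - 1))
  else 0

noncomputable def VV (g h : ℝ) : ℝ := g^2 - 2*(91/100)*g*h + (184/100)*h^2

lemma VV_lower (g h : ℝ) : g^2 ≤ 4 * VV g h := by
  unfold VV
  nlinarith [sq_nonneg (g - 2*h), sq_nonneg (g - (184/91)*h), sq_nonneg h]

lemma VV_v0 (g h : ℝ) : VV (-h) 0 ≤ (999/1000)^2 * VV g h := by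
  unfold VV
  nlinarith [sq_nonneg (g - (91/100)*h), sq_nonneg h]

lemma VV_v1 (g h : ℝ) :
    VV ((5778/10000 + 1214/1000*(5778/10000))*g - h) (1214/1000*(5778/10000)*g)
      ≤ (999/1000)^2 * VV g h := by
  unfold VV
  nlinarith [sq_nonneg (g - (2992/1000)*h), sq_nonneg h, sq_nonneg g]

lemma VV_v2 (g h : ℝ) :
    VV ((5778/10000)*g - h) 0 ≤ (999/1000)^2 * VV g h := by
  unfold VV
  nlinarith [sq_nonneg (g - (40/100)*h), sq_nonneg (g - (50/100)*h), sq_nonneg h, sq_nonneg g]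

/-- convex combination of three points -/
lemma VV_conv (α β γ g0 g1 g2 h0 h1 h2 M : ℝ) (hα : 0 ≤ α) (hβ : 0 ≤ β) (hγ : 0 ≤ γ)
    (hs : α + β + γ = 1) (H0 : VV g0 h0 ≤ M) (H1 : VV g1 h1 ≤ M) (H2 : VV g2 h2 ≤ M) :
    VV (α*g0 + β*g1 + γ*g2) (α*h0 + β*h1 + γ*h2) ≤ M := by
  have e : α * VV g0 h0 + β * VV g1 h1 + γ * VV g2 h2
      - VV (α*g0 + β*g1 + γ*g2) (α*h0 + β*h1 + γ*h2)
      = α*β*VV (g0-g1) (h0-h1) + α*γ*VV (g0-g2) (h0-h2) + β*γ*VV (g1-g2) (h1-h2) := by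
    obtain rfl : α = 1 - β - γ := by linarith
    unfold VV; ring
  have p : ∀ a b, 0 ≤ VV a b := fun a b => by nlinarith [VV_lower a b, sq_nonneg a]
  have a1 := mul_nonneg (mul_nonneg hα hβ) (p (g0-g1) (h0-h1))
  have a2 := mul_nonneg (mul_nonneg hα hγ) (p (g0-g2) (h0-h2))
  have a3 := mul_nonneg (mul_nonneg hβ hγ) (p (g1-g2) (h1-h2))
  have b0 := mul_le_mul_of_nonneg_left H0 hα
  have b1 := mul_le_mul_of_nonneg_left H1 hβ
  have b2 := mul_le_mul_of_nonneg_left H2 hγ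
  have : α * M + β * M + γ * M = M := by rw [← add_mul, ← add_mul, hs, one_mul]
  linarith

lemma VV_step (t b g h : ℝ) (hb : 0 ≤ b) (hbt : b ≤ 1214/1000*t) (ht : t ≤ 5778/10000) :
    VV ((t+b)*g - h) (b*g) ≤ (999/1000)^2 * VV g h := by
  have := VV_conv (1 - t/(5778/10000)) (b/(1214/1000*(5778/10000)))
    (t/(5778/10000) - b/(1214/1000*(5778/10000))) _ _ _ _ _ _ _
    (by linarith) (by positivity)
    (by rw [sub_nonneg, div_le_div_iff₀ (by norm_num) (by norm_num)]; linarith) (by ring)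
    (VV_v0 g h) (VV_v1 g h) (VV_v2 g h)
  convert this using 2 <;> ring

lemma d0_bounds (x y : ℝ) (hx : 0 < x) (hy : 0 < y) (hx' : x ≤ 256/100) (hy' : y ≤ 256/100) :
    1 < d0 x y ∧ d0 x y ≤ 10000/4222 := by
  have q : 0 < 1 + y + x*y := by positivity
  have e1 : (1+2*x)/(1+x) = 1 + x/(1+x) := by field_simp; ring
  have p1 : 0 < x/(1+x) := by positivity
  have p2 : 0 < x*y/(1+y+x*y) := by positivity
  have u1 : x/(1+x) ≤ 256/356 := by
    rw [div_le_div_iff₀ (by positivity) (by norm_num)]; linarith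
  have u2 : x*y/(1+y+x*y) ≤ (256/100)^2/(1+256/100+(256/100)^2) := by
    rw [div_le_div_iff₀ q (by norm_num)]
    nlinarith [mul_nonneg hy.le (sub_nonneg.2 hx'), mul_nonneg hx.le hy.le]
  unfold d0
  rw [e1]
  constructor
  · linarith
  · norm_num at u2 ⊢; linarith

lemma d2_pos (x y : ℝ) (hx : 0 < x) (hy : 0 < y) : 0 < d2 x y := by unfold d2; positivity

lemma dsum (x y : ℝ) (hx : 0 < x) (hy : 0 < y) : d0 x y + d1 x y + d2 x y = 1 := by
  have q : 0 < 1 + y + x*y := by positivity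
  have e1 : (1+2*x)/(1+x) = 1 + x/(1+x) := by field_simp; ring
  unfold d0 d1 d2; rw [e1]; ring

lemma d2_le (x y : ℝ) (hx : 0 < x) (hy : 0 < y) (hx' : x ≤ 256/100) (hy' : y ≤ 256/100) :
    d2 x y ≤ 1214/1000 * (d0 x y - 1) := by
  have q : 0 < 1 + y + x*y := by positivity
  have key : (y*(1+x))^2 ≤ 1214/1000 * ((1+y)*(1+2*(y*(1+x)))) := by
    have h1 : y*(1+x) ≤ 356/100*y := by nlinarith
    have h0 : 0 < y*(1+x) := by positivity
    set u := y*(1+x)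
    have A : u^2*(1+2*(356/100*y)) ≤ (356/100*y)^2*(1+2*u) := by
      nlinarith [mul_nonneg (sub_nonneg.2 h1) h0.le, mul_nonneg (sub_nonneg.2 h1) hy.le, mul_nonneg (mul_nonneg (sub_nonneg.2 h1) hy.le) h0.le]
    have B : (356/100*y)^2 ≤ 1214/1000*((1+y)*(1+2*(356/100*y))) := by nlinarith
    have C := mul_le_mul_of_nonneg_right B (by positivity : 0 ≤ 1+2*u)
    have D : 0 < 1+2*(356/100*y) := by positivity
    refine le_of_mul_le_mul_right ?_ D
    linarith
  have e : 1214/1000 * (d0 x y - 1) - d2 x y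
      = x * (1214/1000 * ((1+y)*(1+2*(y*(1+x)))) - (y*(1+x))^2) / ((1+x)*(1+y)*(1+y+x*y)) := by
    unfold d0 d2; field_simp; ring
  have : 0 ≤ 1214/1000 * (d0 x y - 1) - d2 x y := by
    rw [e]
    exact div_nonneg (mul_nonneg hx.le (by linarith)) (by positivity)
  linarith

lemma d_step (x y f h : ℝ) (hx : 0 < x) (hy : 0 < y) (hx' : x ≤ 256/100) (hy' : y ≤ 256/100) :
    VV (-(d1 x y) * f - h) (d2 x y * f) ≤ (999/1000)^2 * VV (d0 x y * f) h := by
  obtain ⟨l, u⟩ := d0_bounds x y hx hy hx' hy'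
  have p2 := d2_pos x y hx hy
  have s := dsum x y hx hy
  have le := d2_le x y hx hy hx' hy'
  have p0 : 0 < d0 x y := by linarith
  have := VV_step ((d0 x y - 1)/d0 x y) (d2 x y / d0 x y) (d0 x y * f) h (by positivity)
    (by rw [← mul_div_assoc]; exact div_le_div_of_nonneg_right le p0.le)
    (by rw [div_le_iff₀ p0]; linarith)
  convert this using 2
  · have : -d1 x y = d0 x y - 1 + d2 x y := by linarith
    rw [this]; field_simp
  · field_simp

lemma doc_sum (r : ℕ → ℝ) (ϑ : ℕ → ℕ → ℝ) (n j : ℕ) (hj : j < n) :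
    ∑ i ∈ Finset.Icc (j+1) n, ϑ n i * dk3 r i (i - j)
      = ϑ n (j+1) * d1 (r (j+1)) (r j)
        + (if j + 1 < n then d2 (r (j+2)) (r (j+1)) * ϑ n (j+2) else 0) := by
  split_ifs with h
  · rw [← Finset.sum_subset (s₁ := {j+1, j+2})]
    · rw [Finset.sum_pair (by omega)]
      have : j + 2 - j = 2 := by omega
      simp [dk3, this]; ring
    · intro i hi
      simp only [Finset.mem_insert, Finset.mem_singleton] at hi
      simp only [Finset.mem_Icc]; omega
    · intro i hi hi'
      simp only [Finset.mem_insert, Finset.mem_singleton] at hi'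
      simp only [Finset.mem_Icc] at hi
      have a : i - j ≠ 0 := by omega
      have b : i - j ≠ 1 := by omega
      have c : i - j ≠ 2 := by omega
      simp [dk3, a, b, c]
  · obtain rfl : n = j + 1 := by omega
    simp [dk3]

/-- Exponential decay of the BDF3 DOC kernels: if all step ratios satisfy
`0 < r_k ≤ R' < R₃`, where `R₃` is the unique positive root of
`R⁶+R⁵-4R⁴-8R³-10R²-6R-2 = 0`, then there exist constants `c > 0` and `δ ∈ (0,1)`
depending only on `R'` such that, writing `ϑ n j` for `ϑ^{(3,n)}_{n-j}`,
`|ϑ^{(3,n)}_{n-j}| ≤ c δ^{n-j-1}` for all `n ≥ j+2 ≥ 5`; moreover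
`ϑ^{(3,j)}_0 = 1/d^{(3,j)}_0 ∈ (0,1]` and `ϑ^{(3,j+1)}_1 ∈ (0,2]` for all `j ≥ 3`. -/
theorem bdf3_doc_decay (R' R3 : ℝ) (hR3pos : 0 < R3)
    (hR3root : R3^6 + R3^5 - 4*R3^4 - 8*R3^3 - 10*R3^2 - 6*R3 - 2 = 0)
    (hR3uniq : ∀ x : ℝ, 0 < x → x^6 + x^5 - 4*x^4 - 8*x^3 - 10*x^2 - 6*x - 2 = 0 → x = R3)
    (hR' : R' < R3) :
    ∃ c δ : ℝ, 0 < c ∧ 0 < δ ∧ δ < 1 ∧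
      ∀ (r : ℕ → ℝ), (∀ k, 2 ≤ k → 0 < r k ∧ r k ≤ R') →
      ∀ (ϑ : ℕ → ℕ → ℝ),
        (∀ n, 3 ≤ n → ϑ n n = 1 / dk3 r n 0) →
        (∀ n j, 3 ≤ j → j < n →
          ϑ n j = -(1 / dk3 r j 0) * ∑ i ∈ Finset.Icc (j+1) n, ϑ n i * dk3 r i (i - j)) →
        (∀ n j, 3 ≤ j → j + 2 ≤ n → |ϑ n j| ≤ c * δ^(n - j - 1)) ∧
        (∀ j, 3 ≤ j →
          ϑ j j = 1 / dk3 r j 0 ∧ 0 < ϑ j j ∧ ϑ j j ≤ 1 ∧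
            0 < ϑ (j+1) j ∧ ϑ (j+1) j ≤ 2) := by
  have hR : R' ≤ 256/100 := by
    by_contra hc
    push Not at hc
    have h3 : 256/100 < R3 := hc.trans hR'
    obtain ⟨e, he⟩ : ∃ e, e = R3 - 256/100 := ⟨_, rfl⟩
    have e0 : 0 < e := by linarith
    obtain rfl : R3 = e + 256/100 := by linarith
    have : 0 < (e + 256/100)^6 + (e + 256/100)^5 - 4*(e + 256/100)^4 - 8*(e + 256/100)^3
        - 10*(e + 256/100)^2 - 6*(e + 256/100) - 2 := by
      ring_nf
      positivity
    linarith
  refine ⟨2, 999/1000, by norm_num, by norm_num, by norm_num, ?_⟩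
  intro r hr ϑ h1 h2
  have hb : ∀ k, 2 ≤ k → 0 < r k ∧ r k ≤ 256/100 := fun k hk =>
    ⟨(hr k hk).1, (hr k hk).2.trans hR⟩
  have hd0 : ∀ k, dk3 r k 0 = d0 (r k) (r (k-1)) := fun k => by simp [dk3]
  have hpos : ∀ k, 3 ≤ k → 1 < dk3 r k 0 := fun k hk => by
    rw [hd0]
    exact (d0_bounds _ _ (hb k (by omega)).1 (hb (k-1) (by omega)).1
      (hb k (by omega)).2 (hb (k-1) (by omega)).2).1
  have hrec : ∀ n j, 3 ≤ j → j < n → dk3 r j 0 * ϑ n j = -(d1 (r (j+1)) (r j)) * ϑ n (j+1)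
        - (if j + 1 < n then d2 (r (j+2)) (r (j+1)) * ϑ n (j+2) else 0) := by
    intro n j hj hn
    have := hpos j hj
    have h0 : dk3 r j 0 ≠ 0 := by linarith
    rw [h2 n j hj hn, doc_sum r ϑ n j hn]
    field_simp
    ring
  have main : ∀ n m j, 3 ≤ j → j + m = n →
      VV (dk3 r j 0 * ϑ n j) (if j < n then d2 (r (j+1)) (r j) * ϑ n (j+1) else 0)
        ≤ ((999/1000)^2)^m := by
    intro n m
    induction m with
    | zero =>
      intro j hj hn
      obtain rfl : j = n := by omega
      have := hpos j hj
      have h0 : dk3 r j 0 ≠ 0 := by linarith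
      rw [h1 j hj]
      simp [VV, h0]
    | succ m ih =>
      intro j hj hn
      have I := ih (j+1) (by omega) (by omega)
      rw [if_pos (by omega : j < n), hrec n j hj (by omega)]
      have b1 := hb (j+1) (by omega)
      have b2 := hb j (by omega)
      refine (d_step _ _ _ _ b1.1 b2.1 b1.2 b2.2).trans ?_
      rw [hd0] at I
      simp only [Nat.add_sub_cancel] at I
      rw [pow_succ, mul_comm]
      exact mul_le_mul_of_nonneg_right I (by positivity)
  refine ⟨?_, ?_⟩
  · intro n j hj hn
    have M := main n (n-j) j hj (by omega)
    have L := VV_lower (dk3 r j 0 * ϑ n j)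
      (if j < n then d2 (r (j+1)) (r j) * ϑ n (j+1) else 0)
    have hp := hpos j hj
    have A : (dk3 r j 0 * ϑ n j)^2 ≤ (2 * (999/1000)^(n-j))^2 := by
      rw [mul_pow 2, pow_right_comm]
      linarith
    have B := abs_le_of_sq_le_sq A (by positivity)
    have B' : |dk3 r j 0 * ϑ n j| ≤ 2 * (999/1000)^(n-j) := B
    rw [abs_mul, abs_of_pos (by linarith)] at B'
    have C : |ϑ n j| ≤ dk3 r j 0 * |ϑ n j| := by nlinarith [abs_nonneg (ϑ n j)]
    have D : (999/1000 : ℝ)^(n-j) ≤ (999/1000)^(n-j-1) :=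
      pow_le_pow_of_le_one (by norm_num) (by norm_num) (by omega)
    linarith
  · intro j hj
    have hp := hpos j hj
    have hp1 := hpos (j+1) (by omega)
    have H := hrec (j+1) j hj (by omega)
    rw [if_neg (by omega), h1 (j+1) (by omega), sub_zero] at H
    have b1 := hb (j+1) (by omega)
    have b2 := hb j (by omega)
    have e0 := hd0 (j+1)
    simp only [Nat.add_sub_cancel] at e0
    have s := dsum _ _ b1.1 b2.1
    have p2 := d2_pos _ _ b1.1 b2.1
    have le := d2_le _ _ b1.1 b2.1 b1.2 b2.2
    have u := (d0_bounds _ _ b1.1 b2.1 b1.2 b2.2).2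
    rw [← e0] at s le u
    rw [mul_one_div] at H
    have G0 : 0 < -d1 (r (j+1)) (r j) / dk3 r (j+1) 0 := div_pos (by linarith) (by linarith)
    have G1 : -d1 (r (j+1)) (r j) / dk3 r (j+1) 0 ≤ 2 := by
      rw [div_le_iff₀ (by linarith)]; linarith
    rw [← H] at G0 G1
    have t0 : 0 < ϑ (j+1) j := (mul_pos_iff_of_pos_left (by linarith)).1 G0
    refine ⟨h1 j hj, ?_, ?_, t0, ?_⟩
    · rw [h1 j hj]; positivity
    · rw [h1 j hj, div_le_one (by linarith)]; exact hp.le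
    · nlinarith
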